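/- arXiv:1110.5373 — 2 statements merged into one kernel-verified Lean document; each statement's English description precedes it below -/
import Mathlib

section
/- Let H be a d×d Hermitian matrix and let u_1 ≠ u_2 be two indices with H_{u_1 u_2} = H_{u_2 u_1} = −1. For γ ∈ ℝ∖{0} let H(Γ_γ^cut) be the matrix obtained from H by setting the (u_1,u_2) and (u_2,u_1) entries to 0 and replacing the diagonal entries H_{u_1 u_1}, H_{u_2 u_2} by H_{u_1 u_1} − γ and H_{u_2 u_2} − 1/γ; for α ∈ ℝ let H(Γ_mag^α) be the matrix obtained from H by replacing the entries at (u_1,u_2) and (u_2,u_1) by −e^{iα} and −e^{−iα} respectively. Let p(γ) = 1 if γ < 0 and p(γ) = 0 otherwise, and use the convention λ_j(M) = −∞ for j < 1 and λ_j(M) = +∞ for j > d. Then for all n, all γ ∈ ℝ∖{0}, and all α ∈ ℝ: λ_{n−p(γ)}(H(Γ_γ^cut)) ≤ λ_n(H(Γ_mag^α)) ≤ λ_{n−p(γ)+1}(H(Γ_γ^cut)). -/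
/-!
The magnetic matrix is the cut matrix plus the rank-one matrix `γ w wᴴ`, where `w` is `1` at `u1`
and `-e^{-iα} / γ` at `u2`. By the sign of `γ` one of the two matrices dominates the other, so its
eigenvalues are the larger ones. Conversely their quadratic forms agree on the kernel of `w wᴴ`,
whose codimension is at most one, so by a dimension count the larger `n`-th eigenvalue does not
exceed the smaller `(n + 1)`-st.
-/

open Matrix

/-- The eigenvalues of a Hermitian matrix, sorted in increasing order and counted with
multiplicity (junk value `0` if the matrix is not Hermitian). -/
noncomputable def sortedEigs {𝕜 : Type*} [RCLike 𝕜] {d : ℕ} (M : Matrix (Fin d) (Fin d) 𝕜) :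
    Fin d → ℝ :=
  if h : M.IsHermitian then h.eigenvalues ∘ Tuple.sort h.eigenvalues else 0

/-- `eigE M j` is the `j`-th smallest eigenvalue (1-based, counted with multiplicity),
extended by the convention `λ_j = -∞` for `j < 1` and `λ_j = +∞` for `j > d`. -/
noncomputable def eigE {d : ℕ} (M : Matrix (Fin d) (Fin d) ℂ) (j : ℤ) : EReal :=
  if h : 1 ≤ j ∧ j ≤ (d : ℤ) then ((sortedEigs M ⟨(j - 1).toNat, by omega⟩ : ℝ) : EReal)
  else if j < 1 then ⊥ else ⊤

/-- The "cut" modification `H(Γ_γ^cut)` of `H` at the edge `(u1, u2)`. -/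
noncomputable def cutMat {d : ℕ} (H : Matrix (Fin d) (Fin d) ℂ) (u1 u2 : Fin d) (γ : ℝ) :
    Matrix (Fin d) (Fin d) ℂ :=
  Matrix.of fun a b =>
    if a = u1 ∧ b = u2 then 0
    else if a = u2 ∧ b = u1 then 0
    else if a = u1 ∧ b = u1 then H u1 u1 - (γ : ℂ)
    else if a = u2 ∧ b = u2 then H u2 u2 - (γ : ℂ)⁻¹
    else H a b

/-- The "magnetic" modification `H(Γ_mag^α)` of `H` at the edge `(u1, u2)`. -/
noncomputable def magMat {d : ℕ} (H : Matrix (Fin d) (Fin d) ℂ) (u1 u2 : Fin d) (α : ℝ) :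
    Matrix (Fin d) (Fin d) ℂ :=
  Matrix.of fun a b =>
    if a = u1 ∧ b = u2 then -Complex.exp (Complex.I * (α : ℝ))
    else if a = u2 ∧ b = u1 then -Complex.exp (-(Complex.I * (α : ℝ)))
    else H a b

section Subspaces

open Module

variable {K V ι : Type*} [DivisionRing K] [AddCommGroup V] [Module K V]

theorem finrank_span_image_finset_eq_card {v : ι → V} (hv : LinearIndependent K v) (s : Finset ι) :
    finrank K (Submodule.span K (v '' s)) = s.card := by
  rw [Set.image_eq_range]
  exact (finrank_span_eq_card (hv.comp ((↑) : s → ι) Subtype.val_injective)).trans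
    (Fintype.card_coe s)

theorem exists_ne_zero_mem_of_two_mul_finrank_lt [FiniteDimensional K V] {S U W : Submodule K V}
    (h : 2 * finrank K V < finrank K S + finrank K U + finrank K W) :
    ∃ x ≠ 0, x ∈ S ∧ x ∈ U ∧ x ∈ W := by
  have hSU := Submodule.finrank_sup_add_finrank_inf_eq S U
  have hSUW := Submodule.finrank_sup_add_finrank_inf_eq (S ⊓ U) W
  have hSU_le := (S ⊔ U).finrank_le
  have hSUW_le := (S ⊓ U ⊔ W).finrank_le
  have hpos : 0 < finrank K (S ⊓ U ⊓ W : Submodule K V) := by omega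
  have hbot : S ⊓ U ⊓ W ≠ ⊥ := Submodule.one_le_finrank_iff.mp hpos
  obtain ⟨x, ⟨⟨hxS, hxU⟩, hxW⟩, hx0⟩ := Submodule.exists_mem_ne_zero_of_ne_bot hbot
  exact ⟨x, hx0, hxS, hxU, hxW⟩

end Subspaces

section Eigenbasis

open Module

variable {𝕜 E ι : Type*} [RCLike 𝕜] [NormedAddCommGroup E] [InnerProductSpace 𝕜 E]

theorem inner_eq_zero_of_mem_span_image {v : ι → E} (hv : Orthonormal 𝕜 v) {s : Set ι} {x : E}
    (hx : x ∈ Submodule.span 𝕜 (v '' s)) {i : ι} (hi : i ∉ s) : inner 𝕜 (v i) x = 0 := by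
  obtain ⟨l, hl, rfl⟩ := (Finsupp.mem_span_image_iff_linearCombination 𝕜).mp hx
  exact inner_eq_zero_symm.mp (hv.inner_finsupp_eq_zero hi hl)

variable [Fintype ι] {T : E →ₗ[𝕜] E} {b : OrthonormalBasis ι 𝕜 E} {μ : ι → ℝ} {c : ℝ} {s : Set ι}

theorem re_inner_map_self_eq_sum (hb : ∀ i, T (b i) = (μ i : 𝕜) • b i) (x : E) :
    RCLike.re (inner 𝕜 (T x) x) = ∑ i, μ i * ‖inner 𝕜 (b i) x‖ ^ 2 := by
  have hTx : T x = ∑ i, (inner 𝕜 (b i) x * (μ i : 𝕜)) • b i := by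
    conv_lhs => rw [← b.sum_repr' x]
    simp only [map_sum, map_smul, hb, smul_smul]
  simp only [hTx, sum_inner, inner_smul_left, map_mul, RCLike.conj_ofReal, map_sum]
  refine Finset.sum_congr rfl fun i _ => ?_
  rw [mul_right_comm, RCLike.conj_mul, mul_comm]
  norm_cast

theorem re_inner_map_self_le_of_mem_span_image (hb : ∀ i, T (b i) = (μ i : 𝕜) • b i)
    (hμ : ∀ i ∈ s, μ i ≤ c) {x : E} (hx : x ∈ Submodule.span 𝕜 (b '' s)) :
    RCLike.re (inner 𝕜 (T x) x) ≤ c * ‖x‖ ^ 2 := by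
  rw [re_inner_map_self_eq_sum hb, ← b.sum_sq_norm_inner_right x, Finset.mul_sum]
  refine Finset.sum_le_sum fun i _ => ?_
  by_cases hi : i ∈ s
  · exact mul_le_mul_of_nonneg_right (hμ i hi) (sq_nonneg _)
  · simp [inner_eq_zero_of_mem_span_image b.orthonormal hx hi]

theorem le_re_inner_map_self_of_mem_span_image (hb : ∀ i, T (b i) = (μ i : 𝕜) • b i)
    (hμ : ∀ i ∈ s, c ≤ μ i) {x : E} (hx : x ∈ Submodule.span 𝕜 (b '' s)) :
    c * ‖x‖ ^ 2 ≤ RCLike.re (inner 𝕜 (T x) x) := by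
  have hneg : ∀ i, (-T) (b i) = ((-μ i : ℝ) : 𝕜) • b i := fun i => by simp [hb]
  simpa using re_inner_map_self_le_of_mem_span_image hneg (fun i hi => neg_le_neg (hμ i hi)) hx

theorem eigenvalue_le_of_re_inner_le_on {d k : ℕ} {A B : E →ₗ[𝕜] E}
    {a b : OrthonormalBasis (Fin d) 𝕜 E} {α β : Fin d → ℝ} (hα : Monotone α) (hβ : Monotone β)
    (ha : ∀ i, A (a i) = (α i : 𝕜) • a i) (hb : ∀ i, B (b i) = (β i : 𝕜) • b i)
    {S : Submodule 𝕜 E} (hS : d ≤ finrank 𝕜 S + k)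
    (hBA : ∀ x ∈ S, RCLike.re (inner 𝕜 (B x) x) ≤ RCLike.re (inner 𝕜 (A x) x))
    {i j : Fin d} (hij : (i : ℕ) + k ≤ j) : β i ≤ α j := by
  have : FiniteDimensional 𝕜 E := b.toBasis.finiteDimensional_of_finite
  have hE : finrank 𝕜 E = d := by simpa using finrank_eq_card_basis b.toBasis
  let U := Submodule.span 𝕜 (a '' Finset.Iic j)
  let W := Submodule.span 𝕜 (b '' Finset.Ici i)
  have hU : finrank 𝕜 U = j + 1 := by
    rw [finrank_span_image_finset_eq_card a.orthonormal.linearIndependent, Fin.card_Iic]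
  have hW : finrank 𝕜 W = d - i := by
    rw [finrank_span_image_finset_eq_card b.orthonormal.linearIndependent, Fin.card_Ici]
  obtain ⟨x, hx0, hxS, hxU, hxW⟩ : ∃ x ≠ 0, x ∈ S ∧ x ∈ U ∧ x ∈ W :=
    exists_ne_zero_mem_of_two_mul_finrank_lt (by omega)
  have hle : β i * ‖x‖ ^ 2 ≤ α j * ‖x‖ ^ 2 := calc
    β i * ‖x‖ ^ 2 ≤ RCLike.re (inner 𝕜 (B x) x) :=
      le_re_inner_map_self_of_mem_span_image hb (fun _ hl => hβ (Finset.mem_Ici.mp hl)) hxW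
    _ ≤ RCLike.re (inner 𝕜 (A x) x) := hBA x hxS
    _ ≤ α j * ‖x‖ ^ 2 :=
      re_inner_map_self_le_of_mem_span_image ha (fun _ hl => hα (Finset.mem_Iic.mp hl)) hxU
  exact le_of_mul_le_mul_right hle (by positivity)

end Eigenbasis

theorem finrank_ker_toEuclideanLin_add_rank {𝕜 m n : Type*} [RCLike 𝕜] [Finite m] [Fintype n]
    [DecidableEq n] (M : Matrix m n 𝕜) :
    Module.finrank 𝕜 (LinearMap.ker M.toEuclideanLin) + M.rank = Fintype.card n := by
  classical
  have := Fintype.ofFinite m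
  rw [M.rank_eq_finrank_range_toLin (EuclideanSpace.basisFun m 𝕜).toBasis
    (EuclideanSpace.basisFun n 𝕜).toBasis, ← toEuclideanLin_eq_toLin_orthonormal, add_comm,
    LinearMap.finrank_range_add_finrank_ker, finrank_euclideanSpace]

section SortedEigenvalues

open scoped ComplexOrder

variable {𝕜 : Type*} [RCLike 𝕜] {d : ℕ}

theorem sortedEigs_monotone (M : Matrix (Fin d) (Fin d) 𝕜) : Monotone (sortedEigs M) := by
  unfold sortedEigs
  split_ifs with hM
  · exact Tuple.monotone_sort _
  · exact monotone_const

theorem exists_orthonormalBasis_sortedEigs {M : Matrix (Fin d) (Fin d) 𝕜} (hM : M.IsHermitian) :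
    ∃ b : OrthonormalBasis (Fin d) 𝕜 (EuclideanSpace 𝕜 (Fin d)),
      ∀ i, M.toEuclideanLin (b i) = (sortedEigs M i : 𝕜) • b i := by
  refine ⟨hM.eigenvectorBasis.reindex (Tuple.sort hM.eigenvalues).symm, fun i => ?_⟩
  ext l
  have heig := congrFun (hM.mulVec_eigenvectorBasis (Tuple.sort hM.eigenvalues i)) l
  simpa [sortedEigs, hM, toLpLin_apply, RCLike.real_smul_eq_coe_mul] using heig

theorem sortedEigs_le_sortedEigs_add_of_posSemidef {M P : Matrix (Fin d) (Fin d) 𝕜}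
    (hM : M.IsHermitian) (hP : P.PosSemidef) (i : Fin d) :
    sortedEigs M i ≤ sortedEigs (M + P) i := by
  obtain ⟨b, hb⟩ := exists_orthonormalBasis_sortedEigs hM
  obtain ⟨a, ha⟩ := exists_orthonormalBasis_sortedEigs (hM.add hP.isHermitian)
  refine eigenvalue_le_of_re_inner_le_on (k := 0) (S := ⊤) (sortedEigs_monotone _)
    (sortedEigs_monotone _) ha hb (by simp) (fun x _ => ?_) le_rfl
  simpa [inner_add_left] using (isPositive_toEuclideanLin_iff.mpr hP).re_inner_nonneg_left x

theorem sortedEigs_add_le_sortedEigs_of_rank_le {M P : Matrix (Fin d) (Fin d) 𝕜}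
    (hM : M.IsHermitian) (hP : P.IsHermitian) {i j : Fin d} (hij : (i : ℕ) + P.rank ≤ j) :
    sortedEigs (M + P) i ≤ sortedEigs M j := by
  obtain ⟨a, ha⟩ := exists_orthonormalBasis_sortedEigs hM
  obtain ⟨b, hb⟩ := exists_orthonormalBasis_sortedEigs (hM.add hP)
  refine eigenvalue_le_of_re_inner_le_on (sortedEigs_monotone _) (sortedEigs_monotone _) ha hb
    (S := LinearMap.ker P.toEuclideanLin) ?_ (fun x hx => ?_) hij
  · simp [finrank_ker_toEuclideanLin_add_rank]
  · simp [LinearMap.mem_ker.mp hx]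

end SortedEigenvalues

section ExtendedEigenvalues

open scoped ComplexOrder

variable {d : ℕ}

theorem eigE_le_eigE_of_sortedEigs_le {A B : Matrix (Fin d) (Fin d) ℂ} {k : ℕ}
    (h : ∀ i j : Fin d, (i : ℕ) + k ≤ j → sortedEigs A i ≤ sortedEigs B j) {m n : ℤ}
    (hmn : m + k ≤ n) : eigE A m ≤ eigE B n := by
  by_cases hm : m < 1
  · simp [eigE, hm, not_le.mpr hm]
  by_cases hn : (d : ℤ) < n
  · rw [eigE.eq_def B, dif_neg (by omega), if_neg (by omega)]
    exact le_top
  rw [eigE, eigE, dif_pos (by omega), dif_pos (by omega), EReal.coe_le_coe_iff]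
  exact h _ _ (by dsimp only; omega)

theorem eigE_le_eigE_add_of_posSemidef {M P : Matrix (Fin d) (Fin d) ℂ} (hM : M.IsHermitian)
    (hP : P.PosSemidef) (n : ℤ) : eigE M n ≤ eigE (M + P) n :=
  eigE_le_eigE_of_sortedEigs_le (k := 0)
    (fun i _ hij => (sortedEigs_le_sortedEigs_add_of_posSemidef hM hP i).trans
      (sortedEigs_monotone _ hij)) (by simp)

theorem eigE_add_le_eigE_of_rank_le {M P : Matrix (Fin d) (Fin d) ℂ} (hM : M.IsHermitian)
    (hP : P.IsHermitian) {m n : ℤ} (hmn : m + P.rank ≤ n) : eigE (M + P) m ≤ eigE M n :=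
  eigE_le_eigE_of_sortedEigs_le (fun _ _ => sortedEigs_add_le_sortedEigs_of_rank_le hM hP) hmn

theorem eigE_interlacing_add_smul_vecMulVec_of_nonneg {M : Matrix (Fin d) (Fin d) ℂ}
    (hM : M.IsHermitian) (w : Fin d → ℂ) {c : ℝ} (hc : 0 ≤ c) (n : ℤ) :
    eigE M n ≤ eigE (M + (c : ℂ) • vecMulVec w (star w)) n ∧
      eigE (M + (c : ℂ) • vecMulVec w (star w)) n ≤ eigE M (n + 1) := by
  have hP : ((c : ℂ) • vecMulVec w (star w)).PosSemidef :=
    (posSemidef_vecMulVec_self_star w).smul (by exact_mod_cast hc)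
  have hrank : ((c : ℂ) • vecMulVec w (star w)).rank ≤ 1 := by
    rw [← smul_vecMulVec]
    exact rank_vecMulVec_le _ _
  exact ⟨eigE_le_eigE_add_of_posSemidef hM hP n,
    eigE_add_le_eigE_of_rank_le hM hP.isHermitian (by omega)⟩

theorem eigE_interlacing_add_smul_vecMulVec_of_nonpos {M : Matrix (Fin d) (Fin d) ℂ}
    (hM : M.IsHermitian) (w : Fin d → ℂ) {c : ℝ} (hc : c ≤ 0) (n : ℤ) :
    eigE M (n - 1) ≤ eigE (M + (c : ℂ) • vecMulVec w (star w)) n ∧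
      eigE (M + (c : ℂ) • vecMulVec w (star w)) n ≤ eigE M n := by
  have hP : ((c : ℂ) • vecMulVec w (star w)).IsHermitian :=
    (posSemidef_vecMulVec_self_star w).isHermitian.smul (Complex.conj_ofReal c)
  have hneg (m : ℤ) := eigE_interlacing_add_smul_vecMulVec_of_nonneg (hM.add hP) w
    (neg_nonneg.mpr hc) m
  simp only [Complex.ofReal_neg, neg_smul, add_neg_cancel_right] at hneg
  exact ⟨by simpa only [sub_add_cancel] using (hneg (n - 1)).2, (hneg n).1⟩

end ExtendedEigenvalues

section CutAndMagnetic

variable {d : ℕ} {H : Matrix (Fin d) (Fin d) ℂ} {u1 u2 : Fin d}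

/-- The vector `w` for which `γ w wᴴ` carries the cut matrix to the magnetic one: its scale makes
the two diagonal entries `γ` and `1 / γ`, and its phase produces `-e^{iα}` off the diagonal. -/
noncomputable def cutMagVec (u1 u2 : Fin d) (γ α : ℝ) : Fin d → ℂ :=
  Pi.single u1 1 - Pi.single u2 (Complex.exp (-(Complex.I * α)) / γ)

theorem cutMat_isHermitian (hH : H.IsHermitian) (hne : u1 ≠ u2) (γ : ℝ) :
    (cutMat H u1 u2 γ).IsHermitian := by
  refine IsHermitian.ext fun a b => ?_
  simp only [cutMat, of_apply]
  split_ifs <;> simp_all [hH.apply]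

theorem magMat_eq_cutMat_add (hne : u1 ≠ u2) {γ : ℝ} (hγ : γ ≠ 0) (α : ℝ) :
    magMat H u1 u2 α = cutMat H u1 u2 γ +
      (γ : ℂ) • vecMulVec (cutMagVec u1 u2 γ α) (star (cutMagVec u1 u2 γ α)) := by
  have hγ' : (γ : ℂ) ≠ 0 := by exact_mod_cast hγ
  have hconj : star (Complex.exp (-(Complex.I * α))) = Complex.exp (Complex.I * α) := by
    simp [← Complex.exp_conj]
  have hcorner (z : ℂ) : γ * (z / γ) = z := mul_div_cancel₀ z hγ'
  have hdiag : γ * (Complex.exp (-(Complex.I * α)) / γ * (Complex.exp (Complex.I * α) / γ)) =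
      (γ : ℂ)⁻¹ := by
    rw [div_mul_div_comm, ← Complex.exp_add, neg_add_cancel, Complex.exp_zero]
    field_simp
  ext a b
  simp only [magMat, cutMat, cutMagVec, of_apply, Matrix.add_apply, Matrix.smul_apply,
    vecMulVec_apply, Pi.star_apply, Pi.sub_apply, Pi.single_apply, smul_eq_mul]
  split_ifs <;> simp_all

end CutAndMagnetic

theorem cut_mag_interlacing_general {d : ℕ} (H : Matrix (Fin d) (Fin d) ℂ) (hH : H.IsHermitian)
    (u1 u2 : Fin d) (hne : u1 ≠ u2)
    (p : ℝ → ℤ) (hp : ∀ γ, p γ = if γ < 0 then 1 else 0) :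
    ∀ (n : ℤ) (γ : ℝ), γ ≠ 0 → ∀ α : ℝ,
      eigE (cutMat H u1 u2 γ) (n - p γ) ≤ eigE (magMat H u1 u2 α) n ∧
      eigE (magMat H u1 u2 α) n ≤ eigE (cutMat H u1 u2 γ) (n - p γ + 1) := by
  intro n γ hγ α
  have hcut := cutMat_isHermitian hH hne γ
  rw [hp, magMat_eq_cutMat_add hne hγ α]
  split_ifs with hneg
  · rw [sub_add_cancel]
    exact eigE_interlacing_add_smul_vecMulVec_of_nonpos hcut _ hneg.le n
  · rw [sub_zero]
    exact eigE_interlacing_add_smul_vecMulVec_of_nonneg hcut _ (not_lt.mp hneg) n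

/-- interlacing between the "cut" and "magnetic" modifications of a Hermitian
matrix along an edge. -/
theorem cut_mag_interlacing {d : ℕ} (H : Matrix (Fin d) (Fin d) ℂ) (hH : H.IsHermitian)
    (u1 u2 : Fin d) (hne : u1 ≠ u2) (h12 : H u1 u2 = -1) (h21 : H u2 u1 = -1)
    (p : ℝ → ℤ) (hp : ∀ γ, p γ = if γ < 0 then 1 else 0) :
    ∀ (n : ℤ) (γ : ℝ), γ ≠ 0 → ∀ α : ℝ,
      eigE (cutMat H u1 u2 γ) (n - p γ) ≤ eigE (magMat H u1 u2 α) n ∧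
      eigE (magMat H u1 u2 α) n ≤ eigE (cutMat H u1 u2 γ) (n - p γ + 1) :=
  cut_mag_interlacing_general H hH u1 u2 hne p hp
end

section
/- Let Γ = (V,E) be a simple finite connected graph, q : V → ℝ a potential, and H(Γ) = Q − C the discrete Schrödinger operator, where Q = diag(q) and C is the adjacency matrix of Γ. Let β = |E| − |V| + 1, fix a spanning tree of Γ, and let S = {e_1, …, e_β} be the edges not in the tree, with e_j = (u_j, v_j). Suppose f is an eigenvector of H(Γ) corresponding to a simple eigenvalue λ_n(H(Γ)) and f is nonzero at every vertex. Let φ be the number of edges (u,v) ∈ E with f_u f_v < 0, set γ̃_j = f_{v_j}/f_{u_j}, and let p = #{j : γ̃_j < 0}. For γ = (γ_1,…,γ_β) with all γ_j nonzero, let H(Γ^cut_γ) be the matrix obtained from H(Γ) by, for each j, setting the (u_j,v_j) and (v_j,u_j) entries to 0 and replacing the diagonal entries q_{u_j}, q_{v_j} by q_{u_j} − γ_j and q_{v_j} − 1/γ_j. Then the function γ ↦ λ_{φ−p+1}(H(Γ^cut_γ)) is differentiable in a neighborhood of (γ̃_1,…,γ̃_β) and (γ̃_1,…,γ̃_β)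 is a critical point of it: all its partial derivatives ∂λ_{φ−p+1}/∂γ_j vanish there. -/
open Matrix

noncomputable def sE {𝕜 : Type*} [RCLike 𝕜] {d : ℕ} (M : Matrix (Fin d) (Fin d) 𝕜)
    (i : ℕ) : ℝ :=
  if h : i < d then sortedEigs M ⟨i, h⟩ else 0

/-- The discrete Schrödinger operator `H(Γ) = Q - C` of a graph `G` with potential `q`. -/
noncomputable def schrodOp {N : ℕ} (G : SimpleGraph (Fin N)) [DecidableRel G.Adj]
    (q : Fin N → ℝ) : Matrix (Fin N) (Fin N) ℝ :=
  Matrix.diagonal q - G.adjMatrix ℝ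

/-- The cut operator `H(Γ^cut_γ)`: for each `j`, the matrix entries at `(uE j, vE j)` and
`(vE j, uE j)` (equal to `-1` in `H(Γ)`) are replaced by `0` and the diagonal entries at
`uE j`, `vE j` are decreased by `γ j` and `(γ j)⁻¹` respectively. -/
noncomputable def schrodCut {N β : ℕ} (G : SimpleGraph (Fin N)) [DecidableRel G.Adj]
    (q : Fin N → ℝ) (uE vE : Fin β → Fin N) (γ : Fin β → ℝ) :
    Matrix (Fin N) (Fin N) ℝ :=
  schrodOp G q - ∑ j : Fin β, Matrix.of (fun a b =>
    if a = uE j ∧ b = uE j then γ j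
    else if a = vE j ∧ b = vE j then (γ j)⁻¹
    else if (a = uE j ∧ b = vE j) ∨ (a = vE j ∧ b = uE j) then -1
    else 0)

/-- The magnetic operator `H(Γ^α_mag)`: the entries of `H(Γ)` at `(uE j, vE j)` and
`(vE j, uE j)` (equal to `-1`) are replaced by `-exp(i α j)` and `-exp(-i α j)`. -/
noncomputable def schrodMag {N β : ℕ} (G : SimpleGraph (Fin N)) [DecidableRel G.Adj]
    (q : Fin N → ℝ) (uE vE : Fin β → Fin N) (α : Fin β → ℝ) :
    Matrix (Fin N) (Fin N) ℂ :=
  (schrodOp G q).map (fun x => (x : ℂ)) + ∑ j : Fin β, Matrix.of (fun a b =>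
    if a = uE j ∧ b = vE j then 1 - Complex.exp (Complex.I * (α j : ℝ))
    else if a = vE j ∧ b = uE j then 1 - Complex.exp (-(Complex.I * (α j : ℝ)))
    else 0)

/-- The number of sign changes ("zeros") of a vertex function `f`: the number of edges of `G`
at whose endpoints `f` has different signs. -/
noncomputable def signChanges {N : ℕ} (G : SimpleGraph (Fin N)) (f : Fin N → ℝ) : ℕ :=
  {e : Sym2 (Fin N) | e ∈ G.edgeSet ∧ ∀ u v : Fin N, e = s(u, v) → f u * f v < 0}.ncard

/-!
Cutting the edges with the parameters `γ̃ = f_v / f_u` preserves the equation `H f = λ f` and leaves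
a matrix supported on a tree. For such a matrix, Fiedler's theorem says that the eigenvalue of a
nowhere vanishing eigenvector is simple, and that its position is the number of sign changes along
the tree, here `φ - p`. A simple eigenvalue is differentiable in `γ`, and by the Hellmann–Feynman
theorem its derivative at `γ̃` is, up to normalization, that of the quadratic form on `f`. Each cut
contributes `-(γ f_u² + γ⁻¹ f_v² - 2 f_u f_v) = -(γ f_u - f_v)² / γ` to this form, which vanishes to
second order at `γ = f_v / f_u`.
-/

section Spectral

open Filter Topology Asymptotics
open scoped Matrix.Norms.L2Operator

variable {𝕜 : Type*} [RCLike 𝕜] {d : ℕ} {A B M : Matrix (Fin d) (Fin d) 𝕜}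

/-- The Hermitian form `x ↦ ⟪x, M x⟫` of a square matrix, as a real number. -/
noncomputable def hermForm (M : Matrix (Fin d) (Fin d) 𝕜) (x : EuclideanSpace 𝕜 (Fin d)) : ℝ :=
  RCLike.re (inner 𝕜 x (toEuclideanCLM (𝕜 := 𝕜) M x))

lemma hermForm_add (A B : Matrix (Fin d) (Fin d) 𝕜) (x : EuclideanSpace 𝕜 (Fin d)) :
    hermForm (A + B) x = hermForm A x + hermForm B x := by
  simp only [hermForm, map_add, _root_.add_apply, inner_add_right]

lemma hermForm_smul (M : Matrix (Fin d) (Fin d) 𝕜) (c : 𝕜) (x : EuclideanSpace 𝕜 (Fin d)) :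
    hermForm M (c • x) = ‖c‖ ^ 2 * hermForm M x := by
  rw [hermForm, map_smul, inner_smul_left, inner_smul_right, ← mul_assoc, RCLike.conj_mul,
    ← RCLike.ofReal_pow, RCLike.re_ofReal_mul, hermForm]

lemma abs_hermForm_le (M : Matrix (Fin d) (Fin d) 𝕜) (x : EuclideanSpace 𝕜 (Fin d)) :
    |hermForm M x| ≤ ‖M‖ * ‖x‖ ^ 2 :=
  calc |hermForm M x| ≤ ‖x‖ * ‖toEuclideanCLM (𝕜 := 𝕜) M x‖ :=
        (RCLike.abs_re_le_norm _).trans (norm_inner_le_norm _ _)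
    _ ≤ ‖x‖ * (‖M‖ * ‖x‖) := by
        gcongr
        exact (toEuclideanCLM (𝕜 := 𝕜) M).le_opNorm x
    _ = ‖M‖ * ‖x‖ ^ 2 := by ring

lemma sE_val (M : Matrix (Fin d) (Fin d) 𝕜) (i : Fin d) : sE M i = sortedEigs M i :=
  dif_pos i.isLt

lemma sortedEigs_eq (hM : M.IsHermitian) :
    sortedEigs M = hM.eigenvalues ∘ Tuple.sort hM.eigenvalues :=
  dif_pos hM

lemma sortedEigs_monotone_s12 (hM : M.IsHermitian) : Monotone (sortedEigs M) :=
  sortedEigs_eq hM ▸ Tuple.monotone_sort hM.eigenvalues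

/-- An orthonormal eigenbasis of a Hermitian matrix, numbered so that the `i`-th vector belongs to
the `i`-th smallest eigenvalue `sortedEigs M i`. -/
noncomputable def sortedEigenbasis (hM : M.IsHermitian) :
    OrthonormalBasis (Fin d) 𝕜 (EuclideanSpace 𝕜 (Fin d)) :=
  hM.eigenvectorBasis.reindex (Tuple.sort hM.eigenvalues).symm

lemma toEuclideanCLM_sortedEigenbasis (hM : M.IsHermitian) (i : Fin d) :
    toEuclideanCLM (𝕜 := 𝕜) M (sortedEigenbasis hM i) =
      (sortedEigs M i : 𝕜) • sortedEigenbasis hM i := by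
  rw [sortedEigenbasis, OrthonormalBasis.reindex_apply, Equiv.symm_symm, sortedEigs_eq hM]
  ext a
  rw [ofLp_toEuclideanCLM, hM.mulVec_eigenvectorBasis]
  simp [RCLike.real_smul_eq_coe_mul]

lemma inner_sortedEigenbasis_toEuclideanCLM (hM : M.IsHermitian) (i : Fin d)
    (x : EuclideanSpace 𝕜 (Fin d)) :
    inner 𝕜 (sortedEigenbasis hM i) (toEuclideanCLM (𝕜 := 𝕜) M x) =
      sortedEigs M i * inner 𝕜 (sortedEigenbasis hM i) x := by
  have hsymm := isSymmetric_toEuclideanLin_iff.2 hM (sortedEigenbasis hM i) x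
  rw [← coe_toEuclideanCLM_eq_toEuclideanLin] at hsymm
  rw [← RCLike.conj_ofReal, ← inner_smul_left, ← toEuclideanCLM_sortedEigenbasis]
  exact hsymm.symm

lemma norm_toEuclideanCLM_sub_smul_sq (hM : M.IsHermitian) (c : ℝ)
    (x : EuclideanSpace 𝕜 (Fin d)) :
    ‖toEuclideanCLM (𝕜 := 𝕜) M x - (c : 𝕜) • x‖ ^ 2 =
      ∑ i, (sortedEigs M i - c) ^ 2 * ‖inner 𝕜 (sortedEigenbasis hM i) x‖ ^ 2 := by
  rw [← (sortedEigenbasis hM).sum_sq_norm_inner_right]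
  refine Finset.sum_congr rfl fun i _ => ?_
  rw [inner_sub_right, inner_sortedEigenbasis_toEuclideanCLM, inner_smul_right, ← sub_mul,
    ← RCLike.ofReal_sub, norm_mul, RCLike.norm_ofReal, mul_pow, sq_abs]

lemma hermForm_eq_sum (hM : M.IsHermitian) (x : EuclideanSpace 𝕜 (Fin d)) :
    hermForm M x = ∑ i, sortedEigs M i * ‖inner 𝕜 (sortedEigenbasis hM i) x‖ ^ 2 := by
  rw [hermForm, ← (sortedEigenbasis hM).sum_inner_mul_inner, map_sum]
  refine Finset.sum_congr rfl fun i _ => ?_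
  rw [inner_sortedEigenbasis_toEuclideanCLM, mul_left_comm, RCLike.re_ofReal_mul,
    inner_mul_symm_re_eq_norm, norm_mul, norm_inner_symm, sq]

lemma exists_sortedEigs_eq (hM : M.IsHermitian) {c : ℝ} {x : EuclideanSpace 𝕜 (Fin d)}
    (hx : x ≠ 0) (hMx : toEuclideanCLM (𝕜 := 𝕜) M x = (c : 𝕜) • x) :
    ∃ i, sortedEigs M i = c := by
  obtain ⟨i, hi⟩ : ∃ i, inner 𝕜 (sortedEigenbasis hM i) x ≠ 0 := by
    by_contra! h
    exact hx (InnerProductSpace.ext_inner_left_basis (𝕜 := 𝕜) (sortedEigenbasis hM).toBasis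
      (by simpa only [OrthonormalBasis.coe_toBasis, inner_zero_right] using h))
  refine ⟨i, ?_⟩
  have h := inner_sortedEigenbasis_toEuclideanCLM hM i x
  rw [hMx, inner_smul_right] at h
  exact_mod_cast (mul_right_cancel₀ hi h).symm

lemma exists_ne_zero_of_finrank_add_lt {K V F₁ F₂ : Type*} [Field K] [AddCommGroup V] [Module K V]
    [AddCommGroup F₁] [Module K F₁] [AddCommGroup F₂] [Module K F₂] [FiniteDimensional K V]
    [FiniteDimensional K F₁] [FiniteDimensional K F₂] (L₁ : V →ₗ[K] F₁) (L₂ : V →ₗ[K] F₂)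
    (h : Module.finrank K F₁ + Module.finrank K F₂ < Module.finrank K V) :
    ∃ x ≠ 0, L₁ x = 0 ∧ L₂ x = 0 := by
  have hker : LinearMap.ker (L₁.prod L₂) ≠ ⊥ :=
    LinearMap.ker_ne_bot_of_finrank_lt (by rwa [Module.finrank_prod])
  obtain ⟨x, hx, hx0⟩ := Submodule.exists_mem_ne_zero_of_ne_bot hker
  exact ⟨x, hx0, Prod.mk_eq_zero.1 hx⟩

/-- The coordinates, with index in `s`, of a vector in the sorted eigenbasis. -/
noncomputable def eigenCoords (hM : M.IsHermitian) (s : Finset (Fin d)) :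
    EuclideanSpace 𝕜 (Fin d) →ₗ[𝕜] (s → 𝕜) :=
  LinearMap.pi fun i => innerₛₗ 𝕜 (sortedEigenbasis hM i)

lemma hermForm_le_of_eigenCoords_Ioi (hM : M.IsHermitian) {k : Fin d}
    {x : EuclideanSpace 𝕜 (Fin d)} (hx : eigenCoords hM (Finset.Ioi k) x = 0) :
    hermForm M x ≤ sortedEigs M k * ‖x‖ ^ 2 := by
  rw [hermForm_eq_sum hM, ← (sortedEigenbasis hM).sum_sq_norm_inner_right, Finset.mul_sum]
  refine Finset.sum_le_sum fun i _ => ?_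
  rcases le_or_gt i k with hik | hki
  · gcongr
    exact sortedEigs_monotone_s12 hM hik
  · have hi : inner 𝕜 (sortedEigenbasis hM i) x = 0 := congrFun hx ⟨i, Finset.mem_Ioi.2 hki⟩
    simp [hi]

lemma le_hermForm_of_eigenCoords_Iio (hM : M.IsHermitian) {k : Fin d}
    {x : EuclideanSpace 𝕜 (Fin d)} (hx : eigenCoords hM (Finset.Iio k) x = 0) :
    sortedEigs M k * ‖x‖ ^ 2 ≤ hermForm M x := by
  rw [hermForm_eq_sum hM, ← (sortedEigenbasis hM).sum_sq_norm_inner_right, Finset.mul_sum]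
  refine Finset.sum_le_sum fun i _ => ?_
  rcases le_or_gt k i with hki | hik
  · gcongr
    exact sortedEigs_monotone_s12 hM hki
  · have hi : inner 𝕜 (sortedEigenbasis hM i) x = 0 := congrFun hx ⟨i, Finset.mem_Iio.2 hik⟩
    simp [hi]

section CourantFischer

variable {F : Type*} [AddCommGroup F] [Module 𝕜 F] [FiniteDimensional 𝕜 F]

theorem exists_ker_hermForm_le (hM : M.IsHermitian) (k : Fin d)
    (L : EuclideanSpace 𝕜 (Fin d) →ₗ[𝕜] F) (hL : Module.finrank 𝕜 F ≤ k) :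
    ∃ x ≠ 0, L x = 0 ∧ hermForm M x ≤ sortedEigs M k * ‖x‖ ^ 2 := by
  obtain ⟨x, hx0, hLx, hx⟩ := exists_ne_zero_of_finrank_add_lt L (eigenCoords hM (Finset.Ioi k))
    (by simp only [Module.finrank_pi, finrank_euclideanSpace, Fintype.card_fin, Fintype.card_coe,
          Fin.card_Ioi]; omega)
  exact ⟨x, hx0, hLx, hermForm_le_of_eigenCoords_Ioi hM hx⟩

theorem exists_ker_le_hermForm (hM : M.IsHermitian) (k : Fin d)
    (L : EuclideanSpace 𝕜 (Fin d) →ₗ[𝕜] F) (hL : Module.finrank 𝕜 F + k < d) :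
    ∃ x ≠ 0, L x = 0 ∧ sortedEigs M k * ‖x‖ ^ 2 ≤ hermForm M x := by
  obtain ⟨x, hx0, hLx, hx⟩ := exists_ne_zero_of_finrank_add_lt L (eigenCoords hM (Finset.Iio k))
    (by simpa only [Module.finrank_pi, finrank_euclideanSpace, Fintype.card_fin, Fintype.card_coe,
          Fin.card_Iio] using hL)
  exact ⟨x, hx0, hLx, le_hermForm_of_eigenCoords_Iio hM hx⟩

end CourantFischer

theorem sortedEigs_le_add_norm_sub (hA : A.IsHermitian) (hB : B.IsHermitian) (k : Fin d) :
    sortedEigs A k ≤ sortedEigs B k + ‖A - B‖ := by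
  obtain ⟨x, hx0, hBx, hAx⟩ := exists_ker_le_hermForm hA k (eigenCoords hB (Finset.Ioi k))
    (by simp only [Module.finrank_pi, Fintype.card_coe, Fin.card_Ioi]; omega)
  refine le_of_mul_le_mul_right ?_ (pow_pos (norm_pos_iff.2 hx0) 2)
  calc sortedEigs A k * ‖x‖ ^ 2 ≤ hermForm A x := hAx
    _ = hermForm B x + hermForm (A - B) x := by rw [← hermForm_add, add_sub_cancel]
    _ ≤ sortedEigs B k * ‖x‖ ^ 2 + ‖A - B‖ * ‖x‖ ^ 2 :=
        add_le_add (hermForm_le_of_eigenCoords_Ioi hB hBx)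
          ((le_abs_self _).trans (abs_hermForm_le _ x))
    _ = (sortedEigs B k + ‖A - B‖) * ‖x‖ ^ 2 := by ring

theorem abs_sortedEigs_sub_le (hA : A.IsHermitian) (hB : B.IsHermitian) (k : Fin d) :
    |sortedEigs A k - sortedEigs B k| ≤ ‖A - B‖ := by
  have hAB := sortedEigs_le_add_norm_sub hA hB k
  have hBA := sortedEigs_le_add_norm_sub hB hA k
  rw [norm_sub_rev] at hBA
  exact abs_sub_le_iff.2 ⟨by linarith, by linarith⟩

theorem continuousAt_sortedEigs {X : Type*} [TopologicalSpace X]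
    {A : X → Matrix (Fin d) (Fin d) 𝕜} (hA : ∀ x, (A x).IsHermitian) {x₀ : X}
    (hcont : ContinuousAt A x₀) (k : Fin d) :
    ContinuousAt (fun x => sortedEigs (A x) k) x₀ := by
  refine tendsto_iff_norm_sub_tendsto_zero.2 (squeeze_zero (fun _ => norm_nonneg _)
    (fun x => abs_sortedEigs_sub_le (hA x) (hA x₀) k) ?_)
  exact tendsto_iff_norm_sub_tendsto_zero.1 hcont

lemma mul_abs_sub_le_two_mul_sq {a b r : ℝ} (ha : |a| ≤ r) (hb : r ≤ |b|) :
    r * |a - b| ≤ 2 * b ^ 2 :=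
  calc r * |a - b| ≤ |b| * (2 * |b|) := by
        gcongr
        linarith [abs_sub a b]
    _ = 2 * b ^ 2 := by rw [← sq_abs b]; ring

/-- A Temple–Kato type bound: the Rayleigh quotient of an approximate eigenvector is accurate to
second order in the residual. -/
lemma mul_abs_sortedEigs_sub_hermForm_le (hM : M.IsHermitian) {k : Fin d} {c r : ℝ}
    (hk : |sortedEigs M k - c| ≤ r) (hgap : ∀ i ≠ k, r ≤ |sortedEigs M i - c|)
    {w : EuclideanSpace 𝕜 (Fin d)} (hw : ‖w‖ = 1) :
    r * |sortedEigs M k - hermForm M w| ≤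
      2 * ‖toEuclideanCLM (𝕜 := 𝕜) M w - (c : 𝕜) • w‖ ^ 2 := by
  set ρ : Fin d → ℝ := fun i => ‖inner 𝕜 (sortedEigenbasis hM i) w‖ ^ 2
  have hρ : ∑ i, ρ i = 1 := by
    rw [(sortedEigenbasis hM).sum_sq_norm_inner_right, hw, one_pow]
  have hdiff : sortedEigs M k - hermForm M w = ∑ i, (sortedEigs M k - sortedEigs M i) * ρ i := by
    simp only [hermForm_eq_sum hM, sub_mul, Finset.sum_sub_distrib, ← Finset.mul_sum, hρ, mul_one,
      ρ]
  calc r * |sortedEigs M k - hermForm M w|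
      ≤ ∑ i, r * |sortedEigs M k - sortedEigs M i| * ρ i := by
        rw [hdiff]
        simp only [mul_assoc, ← Finset.mul_sum]
        gcongr
        · exact (abs_nonneg _).trans hk
        · refine (Finset.abs_sum_le_sum_abs _ _).trans_eq (Finset.sum_congr rfl fun i _ => ?_)
          rw [abs_mul, abs_of_nonneg (sq_nonneg _ : 0 ≤ ρ i)]
    _ ≤ ∑ i, 2 * (sortedEigs M i - c) ^ 2 * ρ i := by
        refine Finset.sum_le_sum fun i _ => mul_le_mul_of_nonneg_right ?_ (sq_nonneg _)
        rcases eq_or_ne i k with rfl | hik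
        · rw [sub_self, abs_zero, mul_zero]
          positivity
        · rw [← sub_sub_sub_cancel_right _ _ c]
          exact mul_abs_sub_le_two_mul_sq hk (hgap i hik)
    _ = 2 * ‖toEuclideanCLM (𝕜 := 𝕜) M w - (c : 𝕜) • w‖ ^ 2 := by
        simp only [norm_toEuclideanCLM_sub_smul_sq hM, Finset.mul_sum, mul_assoc, ρ]

lemma sortedEigs_sub_hermForm_isBigO {X : Type*} [TopologicalSpace X]
    {A : X → Matrix (Fin d) (Fin d) 𝕜} {x₀ : X} {k : Fin d} {w : EuclideanSpace 𝕜 (Fin d)}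
    (hA : ∀ x, (A x).IsHermitian) (hcont : ContinuousAt A x₀)
    (hsimple : ∀ i ≠ k, sortedEigs (A x₀) i ≠ sortedEigs (A x₀) k) (hw : ‖w‖ = 1)
    (heig : toEuclideanCLM (𝕜 := 𝕜) (A x₀) w = (sortedEigs (A x₀) k : 𝕜) • w) :
    (fun x => sortedEigs (A x) k - hermForm (A x) w) =O[𝓝 x₀]
      fun x => ‖A x - A x₀‖ ^ 2 := by
  set c := sortedEigs (A x₀) k
  have hdist : ∀ i, Tendsto (fun x => |sortedEigs (A x) i - c|) (𝓝 x₀)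
      (𝓝 |sortedEigs (A x₀) i - c|) := fun i =>
    ((continuousAt_sortedEigs hA hcont i).sub_const c).abs
  obtain ⟨r, hr, hgap⟩ : ∃ r > 0, ∀ i ≠ k, r < |sortedEigs (A x₀) i - c| := by
    have hsmall : ∀ i, i ≠ k → ∀ᶠ r in 𝓝[>] (0 : ℝ), r < |sortedEigs (A x₀) i - c| :=
      fun i hik => nhdsWithin_le_nhds
        (eventually_lt_nhds (abs_pos.2 (sub_ne_zero.2 (hsimple i hik))))
    have hall := (eventually_all.2 fun i => eventually_imp_distrib_left.2 (hsmall i))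
    exact (eventually_mem_nhdsWithin.and hall).exists
  have hk : ∀ᶠ x in 𝓝 x₀, |sortedEigs (A x) k - c| < r :=
    (hdist k).eventually_lt_const (by simpa [c] using hr)
  have hne : ∀ᶠ x in 𝓝 x₀, ∀ i ≠ k, r < |sortedEigs (A x) i - c| :=
    eventually_all.2 fun i => eventually_imp_distrib_left.2 fun hik =>
      (hdist i).eventually_const_lt (hgap i hik)
  refine IsBigO.of_bound (2 / r) ?_
  filter_upwards [hk, hne] with x hkx hnex
  have hbound := mul_abs_sortedEigs_sub_hermForm_le (hA x) hkx.le (fun i hi => (hnex i hi).le) hw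
  have hres : ‖toEuclideanCLM (𝕜 := 𝕜) (A x) w - (c : 𝕜) • w‖ ≤ ‖A x - A x₀‖ := by
    rw [← heig, ← _root_.sub_apply, ← map_sub, ← mul_one ‖A x - A x₀‖, ← hw]
    exact (toEuclideanCLM (𝕜 := 𝕜) (A x - A x₀)).le_opNorm w
  rw [Real.norm_eq_abs, norm_pow, norm_norm, div_mul_eq_mul_div, le_div_iff₀' hr]
  exact hbound.trans (by gcongr)

lemma hasFDerivAt_sortedEigs_of_norm_eq_one {X : Type*} [NormedAddCommGroup X] [NormedSpace ℝ X]
    {A : X → Matrix (Fin d) (Fin d) 𝕜} {x₀ : X} {k : Fin d} {w : EuclideanSpace 𝕜 (Fin d)}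
    (hA : ∀ x, (A x).IsHermitian) (hlip : (fun x => A x - A x₀) =O[𝓝 x₀] fun x => x - x₀)
    (hsimple : ∀ i ≠ k, sortedEigs (A x₀) i ≠ sortedEigs (A x₀) k) (hw : ‖w‖ = 1)
    (heig : toEuclideanCLM (𝕜 := 𝕜) (A x₀) w = (sortedEigs (A x₀) k : 𝕜) • w)
    {D : X →L[ℝ] ℝ} (hD : HasFDerivAt (fun x => hermForm (A x) w) D x₀) :
    HasFDerivAt (fun x => sortedEigs (A x) k) D x₀ := by
  have hsq : (fun x => ‖A x - A x₀‖ ^ 2) =O[𝓝 x₀] fun x => ‖x - x₀‖ ^ 2 :=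
    hlip.norm_norm.pow 2
  have hcont : ContinuousAt A x₀ := tendsto_sub_nhds_zero_iff.1
    (hlip.trans_tendsto (tendsto_sub_nhds_zero_iff.2 tendsto_id))
  have herr : HasFDerivAt (fun x => sortedEigs (A x) k - hermForm (A x) w) (0 : X →L[ℝ] ℝ) x₀ :=
    ((sortedEigs_sub_hermForm_isBigO hA hcont hsimple hw heig).trans hsq).hasFDerivAt
      one_lt_two
  simpa [Pi.add_def] using hD.add herr

/-- The Hellmann–Feynman theorem. -/
theorem hasFDerivAt_sortedEigs {X : Type*} [NormedAddCommGroup X] [NormedSpace ℝ X]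
    {A : X → Matrix (Fin d) (Fin d) 𝕜} {x₀ : X} {k : Fin d} {w : EuclideanSpace 𝕜 (Fin d)}
    (hA : ∀ x, (A x).IsHermitian) (hlip : (fun x => A x - A x₀) =O[𝓝 x₀] fun x => x - x₀)
    (hsimple : ∀ i ≠ k, sortedEigs (A x₀) i ≠ sortedEigs (A x₀) k) (hw : w ≠ 0)
    (heig : toEuclideanCLM (𝕜 := 𝕜) (A x₀) w = (sortedEigs (A x₀) k : 𝕜) • w)
    {D : X →L[ℝ] ℝ} (hD : HasFDerivAt (fun x => hermForm (A x) w) D x₀) :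
    HasFDerivAt (fun x => sortedEigs (A x) k) ((‖w‖ ^ 2)⁻¹ • D) x₀ := by
  refine hasFDerivAt_sortedEigs_of_norm_eq_one (w := (‖w‖⁻¹ : 𝕜) • w) hA hlip hsimple
    (norm_smul_inv_norm hw) (by rw [map_smul, heig, smul_comm]) ?_
  simpa only [hermForm_smul, norm_inv, RCLike.norm_ofReal, abs_norm, inv_pow]
    using hD.const_mul (‖w‖ ^ 2)⁻¹

lemma isBoundedLinearMap_hermForm (w : EuclideanSpace ℝ (Fin d)) :
    IsBoundedLinearMap ℝ fun M : Matrix (Fin d) (Fin d) ℝ => hermForm M w := by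
  refine IsLinearMap.with_bound ⟨fun A B => hermForm_add A B w, fun c A => ?_⟩ (‖w‖ ^ 2)
    fun M => (abs_hermForm_le M w).trans_eq (mul_comm _ _)
  simp only [hermForm, map_smul, _root_.smul_apply, inner_smul_right, RCLike.re_to_real,
    smul_eq_mul]

theorem eventually_differentiableAt_sortedEigs {X : Type*} [NormedAddCommGroup X] [NormedSpace ℝ X]
    {A : X → Matrix (Fin d) (Fin d) ℝ} {x₀ : X} {k : Fin d} (hA : ∀ x, (A x).IsHermitian)
    (hdiff : ∀ᶠ x in 𝓝 x₀, DifferentiableAt ℝ A x)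
    (hsimple : ∀ i ≠ k, sortedEigs (A x₀) i ≠ sortedEigs (A x₀) k) :
    ∀ᶠ x in 𝓝 x₀, DifferentiableAt ℝ (fun x => sortedEigs (A x) k) x := by
  have hcont := continuousAt_sortedEigs hA hdiff.self_of_nhds.continuousAt
  have hsimple' : ∀ᶠ x in 𝓝 x₀, ∀ i ≠ k, sortedEigs (A x) i ≠ sortedEigs (A x) k :=
    eventually_all.2 fun i => eventually_imp_distrib_left.2 fun hik =>
      ((hcont i).ne_iff_eventually_ne (hcont k)).1 (hsimple i hik)
  filter_upwards [hdiff, hsimple'] with x hdx hsx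
  set w := sortedEigenbasis (hA x) k
  have hD := ((isBoundedLinearMap_hermForm w).differentiableAt.comp x hdx).hasFDerivAt
  exact (hasFDerivAt_sortedEigs hA hdx.hasFDerivAt.isBigO_sub hsx
    ((sortedEigenbasis (hA x)).orthonormal.ne_zero k)
    (toEuclideanCLM_sortedEigenbasis (hA x) k) hD).differentiableAt

end Spectral

section Fiedler

-- The substitution `x = f * y` writes the form of `lam - A` as a weighted Dirichlet energy of `y`,
-- whose weights are the entries of `A` times the signed products of `f` at the endpoints.
lemma ground_state_identity {R V : Type*} [CommRing R] [Fintype V] {A : Matrix V V R}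
    (hA : A.IsSymm) {f : V → R} {lam : R} (hf : A *ᵥ f = lam • f) (y : V → R) :
    ∑ u, ∑ v, A u v * (f u * f v) * (y u - y v) ^ 2 =
      2 * (lam * ((f * y) ⬝ᵥ (f * y)) - (f * y) ⬝ᵥ A *ᵥ (f * y)) := by
  have hdiag : ∑ u, ∑ v, A u v * (f u * f v) * y u ^ 2 = lam * ((f * y) ⬝ᵥ (f * y)) := by
    rw [dotProduct, Finset.mul_sum]
    refine Finset.sum_congr rfl fun u _ => ?_
    calc ∑ v, A u v * (f u * f v) * y u ^ 2 = f u * y u ^ 2 * (A *ᵥ f) u := by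
          rw [mulVec, dotProduct, Finset.mul_sum]
          exact Finset.sum_congr rfl fun v _ => by ring
      _ = lam * ((f * y) u * (f * y) u) := by
          rw [hf, Pi.smul_apply, smul_eq_mul, Pi.mul_apply]
          ring
  have hdiag' : ∑ u, ∑ v, A u v * (f u * f v) * y v ^ 2 = lam * ((f * y) ⬝ᵥ (f * y)) := by
    rw [← hdiag, Finset.sum_comm]
    exact Finset.sum_congr rfl fun u _ => Finset.sum_congr rfl fun v _ => by rw [hA.apply]; ring
  have hcross : ∑ u, ∑ v, A u v * (f u * f v) * (y u * y v) = (f * y) ⬝ᵥ A *ᵥ (f * y) := by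
    simp only [dotProduct, mulVec, Finset.mul_sum, Pi.mul_apply]
    exact Finset.sum_congr rfl fun u _ => Finset.sum_congr rfl fun v _ => by ring
  calc ∑ u, ∑ v, A u v * (f u * f v) * (y u - y v) ^ 2
      = ∑ u, ∑ v, (A u v * (f u * f v) * y u ^ 2 + A u v * (f u * f v) * y v ^ 2 -
          2 * (A u v * (f u * f v) * (y u * y v))) :=
        Finset.sum_congr rfl fun u _ => Finset.sum_congr rfl fun v _ => by ring
    _ = 2 * (lam * ((f * y) ⬝ᵥ (f * y)) - (f * y) ⬝ᵥ A *ᵥ (f * y)) := by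
        simp only [Finset.sum_sub_distrib, Finset.sum_add_distrib, ← Finset.mul_sum, hdiag, hdiag',
          hcross]
        ring

variable {V : Type*}

section Connected

variable {T : SimpleGraph V}

lemma eq_of_adj_imp_eq {α : Type*} (hT : T.Connected) {y : V → α}
    (hy : ∀ u v, T.Adj u v → y u = y v) (u v : V) : y u = y v := by
  obtain ⟨p⟩ := hT.preconnected u v
  induction p with
  | nil => rfl
  | cons h _ ih => exact (hy _ _ h).trans ih

lemma sum_sum_mul_sub_sq_pos [Fintype V] (hT : T.Connected) {w : V → V → ℝ} {y : V → ℝ}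
    (hw : ∀ u v, y u ≠ y v → 0 ≤ w u v) (hTw : ∀ u v, T.Adj u v → y u ≠ y v → 0 < w u v)
    {r s : V} (hrs : y r ≠ y s) :
    0 < ∑ u, ∑ v, w u v * (y u - y v) ^ 2 := by
  have hnonneg : ∀ u v, 0 ≤ w u v * (y u - y v) ^ 2 := by
    intro u v
    rcases eq_or_ne (y u) (y v) with h | h
    · simp [h]
    · exact mul_nonneg (hw u v h) (sq_nonneg _)
  obtain ⟨u, v, huv, hyuv⟩ : ∃ u v, T.Adj u v ∧ y u ≠ y v := by
    by_contra! hconst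
    exact hrs (eq_of_adj_imp_eq hT hconst r s)
  refine Finset.sum_pos' (fun u _ => Finset.sum_nonneg fun v _ => hnonneg u v)
    ⟨u, Finset.mem_univ u, Finset.sum_pos' (fun v _ => hnonneg u v) ⟨v, Finset.mem_univ v, ?_⟩⟩
  exact mul_pos (hTw u v huv hyuv) (sq_pos_of_ne_zero (sub_ne_zero.2 hyuv))

lemma dotProduct_mulVec_lt [Fintype V] (hT : T.Connected) {A : Matrix V V ℝ} (hA : A.IsSymm)
    (hTA : ∀ u v, T.Adj u v → A u v ≠ 0) {f : V → ℝ} (hf0 : ∀ v, f v ≠ 0) {lam : ℝ}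
    (hf : A *ᵥ f = lam • f) {y : V → ℝ} {r : V} (hyr : y r = 0) (hy0 : y ≠ 0)
    (hy : ∀ u v, A u v * (f u * f v) < 0 → y u = y v) :
    (f * y) ⬝ᵥ A *ᵥ (f * y) < lam * ((f * y) ⬝ᵥ (f * y)) := by
  obtain ⟨s, hs⟩ := Function.ne_iff.1 hy0
  have hw : ∀ u v, y u ≠ y v → 0 ≤ A u v * (f u * f v) := fun u v h =>
    not_lt.1 (mt (hy u v) h)
  have hpos := sum_sum_mul_sub_sq_pos hT hw
    (fun u v huv h => (hw u v h).lt_of_ne'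
      (mul_ne_zero (hTA u v huv) (mul_ne_zero (hf0 u) (hf0 v))))
    (show y r ≠ y s from hyr ▸ hs.symm)
  rw [ground_state_identity hA hf] at hpos
  linarith

end Connected

/-- The increments of a vertex function along the edges of `H`, each edge carrying an arbitrary
orientation, together with its value at the root `r`. -/
noncomputable def rootedGradient (H : SimpleGraph V) (r : V) :
    (V → ℝ) →ₗ[ℝ] (H.edgeSet → ℝ) × ℝ :=
  (LinearMap.pi fun e : H.edgeSet =>
    (LinearMap.proj (Quot.out e.1).1 : (V → ℝ) →ₗ[ℝ] ℝ) - LinearMap.proj (Quot.out e.1).2).prod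
    (LinearMap.proj r)

lemma rootedGradient_eq_zero {r : V} {y : V → ℝ} (hy : rootedGradient H r y = 0) :
    y r = 0 ∧ ∀ u v, H.Adj u v → y u = y v := by
  obtain ⟨hgrad, hyr⟩ := Prod.mk_eq_zero.1 hy
  refine ⟨hyr, fun u v huv => ?_⟩
  have he : y (Quot.out s(u, v)).1 - y (Quot.out s(u, v)).2 = 0 :=
    congrFun hgrad ⟨s(u, v), huv⟩
  have hout : s((Quot.out s(u, v)).1, (Quot.out s(u, v)).2) = s(u, v) := Quot.out_eq _
  rcases Sym2.eq_iff.1 hout with ⟨h₁, h₂⟩ | ⟨h₁, h₂⟩ <;> rw [h₁, h₂] at he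
  · exact sub_eq_zero.1 he
  · exact (sub_eq_zero.1 he).symm

lemma finrank_rootedGradient_codomain [Finite V] (H : SimpleGraph V) :
    Module.finrank ℝ ((H.edgeSet → ℝ) × ℝ) = H.edgeSet.ncard + 1 := by
  have := Fintype.ofFinite H.edgeSet
  rw [Module.finrank_prod, Module.finrank_pi, Module.finrank_self, ← Nat.card_eq_fintype_card,
    Nat.card_coe_set_eq]

variable {d : ℕ} {A : Matrix (Fin d) (Fin d) ℝ} {f : Fin d → ℝ} {lam : ℝ}
  {T H P : SimpleGraph (Fin d)}

lemma hermForm_toLp (A : Matrix (Fin d) (Fin d) ℝ) (x : Fin d → ℝ) :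
    hermForm A (WithLp.toLp 2 x) = x ⬝ᵥ A *ᵥ x := by
  rw [hermForm, inner_toEuclideanCLM, RCLike.re_to_real]

lemma norm_toLp_sq (x : Fin d → ℝ) : ‖WithLp.toLp 2 x‖ ^ 2 = x ⬝ᵥ x := by
  rw [EuclideanSpace.real_norm_sq_eq, dotProduct]
  exact Finset.sum_congr rfl fun v _ => sq (x v)

/-- The rooted gradient of `x / f`. Its kernel is the subspace used in the Courant–Fischer argument
for Fiedler's theorem: `x / f` is constant along `H`, and is not a nonzero constant. -/
noncomputable def rootedRatioGradient (H : SimpleGraph (Fin d)) (r : Fin d) (f : Fin d → ℝ) :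
    EuclideanSpace ℝ (Fin d) →ₗ[ℝ] (H.edgeSet → ℝ) × ℝ :=
  rootedGradient H r ∘ₗ LinearMap.mulLeft ℝ f⁻¹ ∘ₗ (WithLp.linearEquiv 2 ℝ (Fin d → ℝ)).toLinearMap

lemma rootedRatioGradient_eq_zero {r : Fin d} (hf0 : ∀ v, f v ≠ 0) {x : EuclideanSpace ℝ (Fin d)}
    (hx0 : x ≠ 0) (hx : rootedRatioGradient H r f x = 0) :
    ∃ y : Fin d → ℝ, x = WithLp.toLp 2 (f * y) ∧ y ≠ 0 ∧ y r = 0 ∧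
      ∀ u v, H.Adj u v → y u = y v := by
  have hxy : x = WithLp.toLp 2 (f * (f⁻¹ * x.ofLp)) := by
    ext v
    simp [hf0 v]
  refine ⟨f⁻¹ * x.ofLp, hxy, fun hy => hx0 ?_, rootedGradient_eq_zero hx⟩
  rw [hxy, hy, mul_zero, WithLp.toLp_zero]

lemma lt_sortedEigs_of_ncard_lt (hT : T.Connected) (hA : A.IsHermitian)
    (hTA : ∀ u v, T.Adj u v → A u v ≠ 0) (hf0 : ∀ v, f v ≠ 0) (hf : A *ᵥ f = lam • f)
    (hH : ∀ u v, u ≠ v → 0 < A u v * (f u * f v) → H.Adj u v) {k : Fin d}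
    (hk : H.edgeSet.ncard < k) : lam < sortedEigs A k := by
  obtain ⟨x, hx0, hLx, hx⟩ := exists_ker_hermForm_le hA k (rootedRatioGradient H k f)
    (by rwa [finrank_rootedGradient_codomain])
  obtain ⟨y, rfl, hy0, hyr, hyH⟩ := rootedRatioGradient_eq_zero hf0 hx0 hLx
  have hsymm : A.IsSymm := by rwa [← isHermitian_iff_isSymm]
  have hlt := dotProduct_mulVec_lt (A := -A) (lam := -lam) hT hsymm.neg
    (fun u v huv => neg_ne_zero.2 (hTA u v huv)) hf0 (by rw [neg_mulVec, hf, neg_smul]) hyr hy0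
    (fun u v huv => by
      rcases eq_or_ne u v with rfl | hne
      · rfl
      · exact hyH u v (hH u v hne (by simpa using huv)))
  rw [neg_mulVec, dotProduct_neg, neg_mul, neg_lt_neg_iff] at hlt
  rw [← hermForm_toLp, ← norm_toLp_sq] at hlt
  exact lt_of_mul_lt_mul_right (hlt.trans_le hx) (sq_nonneg _)

lemma sortedEigs_lt_of_ncard_lt (hT : T.Connected) (hA : A.IsHermitian)
    (hTA : ∀ u v, T.Adj u v → A u v ≠ 0) (hf0 : ∀ v, f v ≠ 0) (hf : A *ᵥ f = lam • f)
    (hH : ∀ u v, u ≠ v → A u v * (f u * f v) < 0 → H.Adj u v) {k : Fin d}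
    (hk : H.edgeSet.ncard + 1 + k < d) : sortedEigs A k < lam := by
  obtain ⟨x, hx0, hLx, hx⟩ := exists_ker_le_hermForm hA k (rootedRatioGradient H k f)
    (by rwa [finrank_rootedGradient_codomain])
  obtain ⟨y, rfl, hy0, hyr, hyH⟩ := rootedRatioGradient_eq_zero hf0 hx0 hLx
  have hlt := dotProduct_mulVec_lt hT (by rwa [← isHermitian_iff_isSymm]) hTA hf0 hf hyr hy0
    (fun u v huv => by
      rcases eq_or_ne u v with rfl | hne
      · rfl
      · exact hyH u v (hH u v hne huv))
  rw [← hermForm_toLp, ← norm_toLp_sq] at hlt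
  exact lt_of_mul_lt_mul_right (hx.trans_lt hlt) (sq_nonneg _)

/-- Fiedler's theorem on the eigenvectors of acyclic matrices. -/
theorem exists_sortedEigs_eq_of_isTree (hT : T.IsTree) (hA : A.IsHermitian)
    (hTA : ∀ u v, u ≠ v → (A u v ≠ 0 ↔ T.Adj u v)) (hf0 : ∀ v, f v ≠ 0) (hf : A *ᵥ f = lam • f)
    (hP : ∀ u v, T.Adj u v → (P.Adj u v ↔ 0 < A u v * (f u * f v))) :
    ∃ k : Fin d, k = (T ⊓ P).edgeSet.ncard ∧ sortedEigs A k = lam ∧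
      ∀ i ≠ k, sortedEigs A i ≠ lam := by
  have hcard : (T ⊓ P).edgeSet.ncard + (T \ P).edgeSet.ncard + 1 = d := by
    rw [SimpleGraph.edgeSet_inf, SimpleGraph.edgeSet_sdiff,
      Set.ncard_inter_add_ncard_sdiff_eq_ncard, ← Nat.card_coe_set_eq,
      (SimpleGraph.isTree_iff_connected_and_card.1 hT).2, Nat.card_fin]
  have hhigh : ∀ i : Fin d, (T ⊓ P).edgeSet.ncard < i → lam < sortedEigs A i := fun i =>
    lt_sortedEigs_of_ncard_lt (H := T ⊓ P) hT.connected hA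
      (fun u v huv => (hTA u v huv.ne).2 huv) hf0 hf
      fun u v huv hpos =>
        have hTuv := (hTA u v huv).1 (left_ne_zero_of_mul hpos.ne')
        ⟨hTuv, (hP u v hTuv).2 hpos⟩
  have hlow : ∀ i : Fin d, (i : ℕ) < (T ⊓ P).edgeSet.ncard → sortedEigs A i < lam := fun i hi =>
    sortedEigs_lt_of_ncard_lt (H := T \ P) hT.connected hA
      (fun u v huv => (hTA u v huv.ne).2 huv) hf0 hf
      (fun u v huv hneg =>
        have hTuv := (hTA u v huv).1 (left_ne_zero_of_mul hneg.ne)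
        ⟨hTuv, fun h => hneg.not_gt ((hP u v hTuv).1 h)⟩)
      (by omega)
  obtain ⟨v⟩ := hT.connected.nonempty
  obtain ⟨k, hk⟩ := exists_sortedEigs_eq hA (x := WithLp.toLp 2 f) (c := lam)
    (fun h => hf0 v (congrFun (congrArg WithLp.ofLp h) v))
    (by rw [toEuclideanCLM_toLp, hf]; rfl)
  have hunique : ∀ i, sortedEigs A i = lam → (i : ℕ) = (T ⊓ P).edgeSet.ncard := fun i hi =>
    le_antisymm (not_lt.1 fun h => (hhigh i h).ne' hi) (not_lt.1 fun h => (hlow i h).ne hi)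
  exact ⟨k, hunique k hk, hk, fun i hik hi =>
    hik (Fin.ext ((hunique i hi).trans (hunique k hk).symm))⟩

end Fiedler

section Cut

/-- The graph of all pairs of vertices at which `f` has opposite signs. -/
def signChangeGraph {V : Type*} (f : V → ℝ) : SimpleGraph V where
  Adj u v := f u * f v < 0
  symm := ⟨fun u v h => by rwa [mul_comm]⟩
  loopless := ⟨fun u h => (mul_self_nonneg (f u)).not_gt h⟩

lemma signChanges_eq {N : ℕ} (G : SimpleGraph (Fin N)) (f : Fin N → ℝ) :
    signChanges G f = (G ⊓ signChangeGraph f).edgeSet.ncard := by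
  rw [signChanges]
  congr 1
  ext e
  induction e using Sym2.ind with
  | _ u v =>
    refine and_congr_right fun _ => ⟨fun h => h u v rfl, fun h a b hab => ?_⟩
    have hmem : s(a, b) ∈ (signChangeGraph f).edgeSet := hab ▸ h
    exact hmem

lemma signChanges_sub_ncard {N β : ℕ} {G : SimpleGraph (Fin N)} {uE vE : Fin β → Fin N}
    (hadj : ∀ j, G.Adj (uE j) (vE j))
    (hdistinct : ∀ i j, s(uE i, vE i) = s(uE j, vE j) → i = j) (f : Fin N → ℝ) :
    signChanges G f - {j | f (vE j) / f (uE j) < 0}.ncard =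
      (G.deleteEdges {e | ∃ j, e = s(uE j, vE j)} ⊓ signChangeGraph f).edgeSet.ncard := by
  set J : Set (Fin β) := {j | f (vE j) / f (uE j) < 0}
  have hJ : ∀ j, j ∈ J ↔ f (uE j) * f (vE j) < 0 := fun j => by
    rw [mul_comm]
    exact (div_neg_iff (a := f (vE j))).trans mul_neg_iff.symm
  have hsub : (fun j => s(uE j, vE j)) '' J ⊆ (G ⊓ signChangeGraph f).edgeSet := by
    rintro _ ⟨j, hj, rfl⟩
    exact ⟨hadj j, (hJ j).1 hj⟩
  have hdiff : (G.deleteEdges {e | ∃ j, e = s(uE j, vE j)} ⊓ signChangeGraph f).edgeSet =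
      (G ⊓ signChangeGraph f).edgeSet \ (fun j => s(uE j, vE j)) '' J := by
    ext e
    induction e using Sym2.ind with
    | _ u v =>
      have hcut : s(u, v) ∈ (signChangeGraph f).edgeSet →
          ((∃ j, s(u, v) = s(uE j, vE j)) ↔ s(u, v) ∈ (fun j => s(uE j, vE j)) '' J) := by
        refine fun huv => exists_congr fun j => ⟨fun h => ⟨(hJ j).2 ?_, h.symm⟩, fun h => h.2.symm⟩
        exact (signChangeGraph f).mem_edgeSet.1 (h ▸ huv)
      simp only [SimpleGraph.edgeSet_inf, SimpleGraph.edgeSet_deleteEdges, Set.mem_inter_iff,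
        Set.mem_sdiff, Set.mem_ofPred_eq]
      grind
  rw [hdiff, Set.ncard_sdiff hsub, Set.ncard_image_of_injective _ hdistinct, signChanges_eq]

/-- The decrease of a Schrödinger matrix caused by cutting the edge `uv` with parameter `t`. -/
def edgeCut {V K : Type*} [DecidableEq V] [Field K] (u v : V) (t : K) : Matrix V V K :=
  t • single u u 1 + t⁻¹ • single v v 1 - single u v 1 - single v u 1

section EdgeCut

variable {V K : Type*} [DecidableEq V] [Field K]

lemma edgeCut_isSymm (u v : V) (t : K) : (edgeCut u v t).IsSymm := by
  simp only [IsSymm, edgeCut, transpose_sub, transpose_add, transpose_smul, transpose_single]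
  abel

lemma edgeCut_apply_of_ne {a b : V} (hab : a ≠ b) (u v : V) (t : K) :
    edgeCut u v t a b = if s(a, b) = s(u, v) then -1 else 0 := by
  simp only [edgeCut, Matrix.sub_apply, Matrix.add_apply, Matrix.smul_apply, single_apply,
    Sym2.eq_iff, smul_eq_mul]
  grind

variable [Fintype V]

lemma edgeCut_mulVec (u v : V) (t : K) (f : V → K) :
    edgeCut u v t *ᵥ f = Pi.single u (t * f u - f v) + Pi.single v (t⁻¹ * f v - f u) := by
  ext a
  simp only [edgeCut, sub_mulVec, add_mulVec, smul_mulVec, single_mulVec, Pi.single_sub]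
  simp only [Pi.sub_apply, Pi.add_apply, Pi.smul_apply, Pi.single_apply, Function.update_apply,
    Pi.zero_apply, smul_eq_mul, one_mul, mul_ite, mul_zero]
  ring

lemma dotProduct_edgeCut_mulVec (u v : V) (t : K) (f : V → K) :
    f ⬝ᵥ edgeCut u v t *ᵥ f = t * f u ^ 2 + t⁻¹ * f v ^ 2 - 2 * (f u * f v) := by
  rw [edgeCut_mulVec, dotProduct_add, dotProduct_single, dotProduct_single]
  ring

lemma edgeCut_div_mulVec {f : V → K} {u v : V} (hu : f u ≠ 0) (hv : f v ≠ 0) :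
    edgeCut u v (f v / f u) *ᵥ f = 0 := by
  rw [edgeCut_mulVec, div_mul_cancel₀ _ hu, inv_div, div_mul_cancel₀ _ hv, sub_self, sub_self,
    Pi.single_zero, Pi.single_zero, add_zero]

end EdgeCut

lemma hasDerivAt_cut_form {a b : ℝ} (ha : a ≠ 0) (hb : b ≠ 0) :
    HasDerivAt (fun t => t * a ^ 2 + t⁻¹ * b ^ 2 - 2 * (a * b)) 0 (b / a) := by
  refine ((((hasDerivAt_id (b / a)).mul_const (a ^ 2)).add
    ((hasDerivAt_inv (div_ne_zero hb ha)).mul_const (b ^ 2))).sub_const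
      (2 * (a * b))).congr_deriv ?_
  field_simp
  ring

variable {N β : ℕ} {G : SimpleGraph (Fin N)} [DecidableRel G.Adj] {q : Fin N → ℝ}
  {uE vE : Fin β → Fin N}

lemma schrodCut_eq (hne : ∀ j, uE j ≠ vE j) (γ : Fin β → ℝ) :
    schrodCut G q uE vE γ = schrodOp G q - ∑ j, edgeCut (uE j) (vE j) (γ j) := by
  rw [schrodCut]
  congr 1
  refine Finset.sum_congr rfl fun j _ => ?_
  have := hne j
  ext a b
  simp only [edgeCut, of_apply, Matrix.sub_apply, Matrix.add_apply, Matrix.smul_apply,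
    single_apply, smul_eq_mul]
  grind

lemma schrodCut_isHermitian (hne : ∀ j, uE j ≠ vE j) (γ : Fin β → ℝ) :
    (schrodCut G q uE vE γ).IsHermitian := by
  rw [isHermitian_iff_isSymm, schrodCut_eq hne, schrodOp]
  refine ((isSymm_diagonal q).sub G.isSymm_adjMatrix).sub ?_
  rw [IsSymm, transpose_sum]
  exact Finset.sum_congr rfl fun j _ => edgeCut_isSymm _ _ _

open Classical in
lemma schrodCut_apply_of_ne (hadj : ∀ j, G.Adj (uE j) (vE j))
    (hdistinct : ∀ i j, s(uE i, vE i) = s(uE j, vE j) → i = j) (γ : Fin β → ℝ) {a b : Fin N}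
    (hab : a ≠ b) :
    schrodCut G q uE vE γ a b =
      if (G.deleteEdges {e | ∃ j, e = s(uE j, vE j)}).Adj a b then -1 else 0 := by
  have hcut : schrodCut G q uE vE γ a b =
      (if G.Adj a b then -1 else 0) - ∑ j, if s(a, b) = s(uE j, vE j) then -1 else 0 := by
    simp only [schrodCut_eq fun j => (hadj j).ne, schrodOp, Matrix.sub_apply, Matrix.sum_apply,
      diagonal_apply_ne q hab, edgeCut_apply_of_ne hab, SimpleGraph.adjMatrix_apply]
    split_ifs <;> simp
  rw [hcut]
  by_cases hex : ∃ j, s(a, b) = s(uE j, vE j)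
  · obtain ⟨j, hj⟩ := hex
    have hG : G.Adj a b := by
      rw [← SimpleGraph.mem_edgeSet, hj]
      exact hadj j
    rw [Finset.sum_eq_single_of_mem j (Finset.mem_univ j) fun i _ hij =>
      if_neg fun hi => hij (hdistinct i j (hi.symm.trans hj)), if_pos hj, if_pos hG, sub_self,
      if_neg (by simp only [SimpleGraph.deleteEdges_adj]; exact fun h => h.2 ⟨j, hj⟩)]
  · rw [Finset.sum_eq_zero fun j _ => if_neg fun hj => hex ⟨j, hj⟩, sub_zero]
    simp only [SimpleGraph.deleteEdges_adj, Set.mem_ofPred_eq, hex, not_false_eq_true, and_true]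

lemma schrodCut_ratio_mulVec (hne : ∀ j, uE j ≠ vE j) {f : Fin N → ℝ} (hf0 : ∀ v, f v ≠ 0) :
    schrodCut G q uE vE (fun j => f (vE j) / f (uE j)) *ᵥ f = schrodOp G q *ᵥ f := by
  rw [schrodCut_eq hne, sub_mulVec, Matrix.sum_mulVec,
    Finset.sum_eq_zero fun j _ => edgeCut_div_mulVec (hf0 _) (hf0 _), sub_zero]

open scoped Matrix.Norms.L2Operator in
lemma differentiableAt_schrodCut (hne : ∀ j, uE j ≠ vE j) {γ : Fin β → ℝ} (hγ : ∀ j, γ j ≠ 0) :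
    DifferentiableAt ℝ (schrodCut G q uE vE) γ := by
  rw [funext (schrodCut_eq (G := G) (q := q) hne)]
  simp only [edgeCut]
  fun_prop (disch := exact hγ _)

lemma hasFDerivAt_hermForm_schrodCut (hne : ∀ j, uE j ≠ vE j) {f : Fin N → ℝ}
    (hf0 : ∀ v, f v ≠ 0) :
    HasFDerivAt (fun γ => hermForm (schrodCut G q uE vE γ) (WithLp.toLp 2 f))
      (0 : (Fin β → ℝ) →L[ℝ] ℝ) (fun j => f (vE j) / f (uE j)) := by
  have hterm : ∀ j, HasFDerivAt (fun γ : Fin β → ℝ =>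
      f ⬝ᵥ edgeCut (uE j) (vE j) (γ j) *ᵥ f) (0 : (Fin β → ℝ) →L[ℝ] ℝ)
      (fun j => f (vE j) / f (uE j)) := by
    intro j
    simp only [dotProduct_edgeCut_mulVec]
    have hcomp := (hasDerivAt_cut_form (hf0 (uE j)) (hf0 (vE j))).comp_hasFDerivAt
      (fun j => f (vE j) / f (uE j)) (hasFDerivAt_apply (𝕜 := ℝ) j _)
    rwa [zero_smul] at hcomp
  simp only [hermForm_toLp, schrodCut_eq hne, sub_mulVec, Matrix.sum_mulVec, dotProduct_sub,
    dotProduct_sum]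
  simpa using (HasFDerivAt.fun_sum fun j (_ : j ∈ Finset.univ) => hterm j).const_sub
    (f ⬝ᵥ schrodOp G q *ᵥ f)

lemma exists_sortedEigs_schrodCut_eq (hadj : ∀ j, G.Adj (uE j) (vE j))
    (hdistinct : ∀ i j, s(uE i, vE i) = s(uE j, vE j) → i = j)
    (htree : (G.deleteEdges {e | ∃ j, e = s(uE j, vE j)}).IsTree) {γ : Fin β → ℝ} {f : Fin N → ℝ}
    {lam : ℝ} (hf0 : ∀ v, f v ≠ 0) (hf : schrodCut G q uE vE γ *ᵥ f = lam • f) :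
    ∃ k : Fin N,
      k = (G.deleteEdges {e | ∃ j, e = s(uE j, vE j)} ⊓ signChangeGraph f).edgeSet.ncard ∧
      sortedEigs (schrodCut G q uE vE γ) k = lam ∧
      ∀ i ≠ k, sortedEigs (schrodCut G q uE vE γ) i ≠ lam := by
  refine exists_sortedEigs_eq_of_isTree htree (schrodCut_isHermitian (fun j => (hadj j).ne) γ)
    (fun u v huv => ?_) hf0 hf fun u v huv => ?_
  · simp [schrodCut_apply_of_ne hadj hdistinct γ huv]
  · rw [schrodCut_apply_of_ne hadj hdistinct γ huv.ne, if_pos huv, neg_one_mul, neg_pos]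
    rfl

end Cut

open Filter Topology Matrix.Norms.L2Operator in
theorem cut_eigenvalue_critical_point_general {N β : ℕ} (G : SimpleGraph (Fin N))
    [DecidableRel G.Adj] (q : Fin N → ℝ) (uE vE : Fin β → Fin N)
    (hadj : ∀ j, G.Adj (uE j) (vE j))
    (hdistinct : ∀ i j, s(uE i, vE i) = s(uE j, vE j) → i = j)
    (htree : (G.deleteEdges {e | ∃ j, e = s(uE j, vE j)}).IsTree)
    (f : Fin N → ℝ) (lam : ℝ) (heig : (schrodOp G q).mulVec f = lam • f)
    (hf0 : ∀ v, f v ≠ 0)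
    (φ p : ℕ) (hφ : φ = signChanges G f)
    (hp : p = {j : Fin β | f (vE j) / f (uE j) < 0}.ncard)
    (lamCut : (Fin β → ℝ) → ℝ)
    (hlamCut : lamCut = fun γ => sE (schrodCut G q uE vE γ) (φ - p)) :
    (∀ᶠ γ in nhds (fun j => f (vE j) / f (uE j)), DifferentiableAt ℝ lamCut γ) ∧
    fderiv ℝ lamCut (fun j => f (vE j) / f (uE j)) = 0 := by
  have hne : ∀ j, uE j ≠ vE j := fun j => (hadj j).ne
  have hherm := schrodCut_isHermitian (G := G) (q := q) hne
  have hcut : schrodCut G q uE vE (fun j => f (vE j) / f (uE j)) *ᵥ f = lam • f := by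
    rw [schrodCut_ratio_mulVec hne hf0, heig]
  obtain ⟨k, hk, hlam, hsimple⟩ := exists_sortedEigs_schrodCut_eq hadj hdistinct htree hf0 hcut
  obtain rfl : lamCut = fun γ => sortedEigs (schrodCut G q uE vE γ) k := by
    rw [hlamCut, hφ, hp, signChanges_sub_ncard hadj hdistinct, ← hk]
    exact funext fun γ => sE_val _ k
  have hdiff : ∀ᶠ γ in 𝓝 (fun j => f (vE j) / f (uE j)),
      DifferentiableAt ℝ (schrodCut G q uE vE) γ :=
    (eventually_all.2 fun j => (continuousAt_apply j _).eventually_ne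
      (div_ne_zero (hf0 (vE j)) (hf0 (uE j)))).mono fun γ => differentiableAt_schrodCut hne
  rw [← hlam] at hsimple hcut
  refine ⟨eventually_differentiableAt_sortedEigs hherm hdiff hsimple, ?_⟩
  have hderiv := hasFDerivAt_sortedEigs hherm hdiff.self_of_nhds.hasFDerivAt.isBigO_sub hsimple
    (w := WithLp.toLp 2 f) (fun h => hf0 k (congrFun (congrArg WithLp.ofLp h) k))
    (by rw [toEuclideanCLM_toLp, hcut]; rfl) (hasFDerivAt_hermForm_schrodCut hne hf0)
  rw [hderiv.fderiv, smul_zero]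

/-- the point `γ̃ = (f_{v_j}/f_{u_j})_j` is a critical point of the function
`γ ↦ λ_{φ-p+1}(H(Γ^cut_γ))` (which is differentiable in a neighborhood of `γ̃`). -/
theorem cut_eigenvalue_critical_point {N β : ℕ} (G : SimpleGraph (Fin N))
    [DecidableRel G.Adj] (hconn : G.Connected) (q : Fin N → ℝ)
    (uE vE : Fin β → Fin N)
    (hadj : ∀ j, G.Adj (uE j) (vE j))
    (hdistinct : ∀ i j, s(uE i, vE i) = s(uE j, vE j) → i = j)
    (htree : (G.deleteEdges {e | ∃ j, e = s(uE j, vE j)}).IsTree)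
    (hβ : β + N = G.edgeFinset.card + 1)
    (n : ℕ) (hn1 : 1 ≤ n) (hn2 : n ≤ N)
    (f : Fin N → ℝ)
    (heig : (schrodOp G q).mulVec f = sE (schrodOp G q) (n - 1) • f)
    (hsimple : Module.finrank ℝ
      (Module.End.eigenspace (Matrix.toLin' (schrodOp G q)) (sE (schrodOp G q) (n - 1))) = 1)
    (hf0 : ∀ v, f v ≠ 0)
    (φ p : ℕ) (hφ : φ = signChanges G f)
    (hp : p = {j : Fin β | f (vE j) / f (uE j) < 0}.ncard)
    (lamCut : (Fin β → ℝ) → ℝ)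
    (hlamCut : lamCut = fun γ => sE (schrodCut G q uE vE γ) (φ - p)) :
    (∀ᶠ γ in nhds (fun j => f (vE j) / f (uE j)), DifferentiableAt ℝ lamCut γ) ∧
    fderiv ℝ lamCut (fun j => f (vE j) / f (uE j)) = 0 := by
  exact cut_eigenvalue_critical_point_general G q uE vE hadj hdistinct htree f _ heig hf0 φ p hφ hp
    lamCut hlamCut
end
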